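/- arXiv:1811.04649 — 3 statements merged into one kernel-verified Lean document; each statement's English description precedes it below -/
import Mathlib

section
/- Let A be a unital associative algebra over ℂ, let p ≥ 1 be an integer, and let g be a ℂ-algebra automorphism of A with g^p = id. Let W be a simple left A-module such that for every i with 1 ≤ i ≤ p−1 the twisted module W∘gⁱ is not isomorphic to W as an A-module. Then W, regarded as a module over the fixed subalgebra A^g = {a ∈ A : g(a) = a} by restriction of the action, is a simple A^g-module. -/
/-- The fixed-point subalgebra `A^g = {a ∈ A : g(a) = a}` of a `ℂ`-algebra automorphism. -/
def fixedSubalgebra {A : Type*} [Ring A] [Algebra ℂ A] (g : A ≃ₐ[ℂ] A) : Subalgebra ℂ A :=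
  AlgHom.equalizer g.toAlgHom (AlgHom.id ℂ A)

/-!
Let a finite group `G` act on a ring `R`, and let `w ≠ 0` in `W`. If `W` is isomorphic to none of
the twists `W ∘ g` with `g ≠ 1`, then Schur's lemma shows that the annihilator of `w` in `W` does
not contain the intersection of its annihilators in these twists. So there is `a : R` with
`a • w ≠ 0` and `(g • a) • w = 0` for all `g ≠ 1`. For every `c : R` the trace `∑ g, g • (c * a)`
is fixed by `G` and sends `w` to `c • a • w`, which is an arbitrary element of `W` because `W` is
simple over `R`.
-/

section Schur

variable {R M V' : Type*} [Ring R] [AddCommGroup M] [Module R M]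
  [AddCommGroup V'] [Module R V'] [IsSimpleModule R V']

theorem nonempty_linearEquiv_of_ker_le_ker {V : Type*} [AddCommGroup V] [Module R V]
    [IsSimpleModule R V] {f : M →ₗ[R] V} {f' : M →ₗ[R] V'} (hf' : f' ≠ 0)
    (hle : f.ker ≤ f'.ker) : Nonempty (V ≃ₗ[R] V') := by
  have hf : f ≠ 0 := by
    rintro rfl
    exact hf' (LinearMap.ker_eq_top.1 (top_le_iff.1 (LinearMap.ker_zero.ge.trans hle)))
  let e : (M ⧸ f.ker) ≃ₗ[R] V := f.quotKerEquivOfSurjective (LinearMap.surjective_of_ne_zero hf)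
  have : IsSimpleModule R (M ⧸ f.ker) := .congr e
  have hlift : f.ker.liftQ f' hle ≠ 0 := fun h ↦ hf' (by
    rw [← f.ker.liftQ_mkQ f' hle, h, LinearMap.zero_comp])
  exact ⟨e.symm.trans (.ofBijective _ (LinearMap.bijective_of_ne_zero hlift))⟩

theorem exists_nonempty_linearEquiv_of_inf_ker_le_ker {ι : Type*} {V : ι → Type*}
    [∀ i, AddCommGroup (V i)] [∀ i, Module R (V i)] [∀ i, IsSimpleModule R (V i)]
    {f : ∀ i, M →ₗ[R] V i} {f' : M →ₗ[R] V'} (hf' : f' ≠ 0) (s : Finset ι)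
    (hle : s.inf (fun i ↦ (f i).ker) ≤ f'.ker) : ∃ i ∈ s, Nonempty (V i ≃ₗ[R] V') := by
  classical
  induction s using Finset.induction_on with
  | empty => exact absurd (LinearMap.ker_eq_top.1 (top_le_iff.1 hle)) hf'
  | insert k s _ ih =>
    let N : Submodule R M := s.inf fun i ↦ (f i).ker
    by_cases hN : N ≤ f'.ker
    · obtain ⟨i, hi, hiso⟩ := ih hN
      exact ⟨i, Finset.mem_insert_of_mem hi, hiso⟩
    · have hf'N : f'.domRestrict N ≠ 0 := fun h ↦ hN fun x hx ↦ congr($h ⟨x, hx⟩)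
      have hleN : ((f k).domRestrict N).ker ≤ (f'.domRestrict N).ker := fun x hx ↦
        hle (by rw [Finset.inf_insert]; exact ⟨hx, x.2⟩)
      exact ⟨k, Finset.mem_insert_self k s, nonempty_linearEquiv_of_ker_le_ker hf'N hleN⟩

end Schur

/-- The twist `W ∘ σ` of an `S`-module `W` along a ring homomorphism `σ : R →+* S`: the additive
group `W` on which `a : R` acts as `σ a`. It is a type synonym, so that it does not compete with
the original action on `W` when `R = S`. -/
def TwistedModule {R S : Type*} [Ring R] [Ring S] (_σ : R →+* S) (W : Type*) : Type _ := W

namespace TwistedModule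

variable {R S W : Type*} [Ring R] [Ring S] [AddCommGroup W]

instance (σ : R →+* S) : AddCommGroup (TwistedModule σ W) := inferInstanceAs (AddCommGroup W)

/-- The identity map from `W` to its twist `W ∘ σ`. -/
def of (σ : R →+* S) : W ≃+ TwistedModule σ W := AddEquiv.refl W

variable [Module S W]

instance (σ : R →+* S) : Module R (TwistedModule σ W) := Module.compHom W σ

theorem smul_of (σ : R →+* S) (a : R) (w : W) : a • of σ w = of σ (σ a • w) := rfl

instance (σ : R →+* S) [RingHomSurjective σ] [IsSimpleModule S W] :
    IsSimpleModule R (TwistedModule σ W) :=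
  let untwist : TwistedModule σ W →ₛₗ[σ] W :=
    { (of σ).symm with map_smul' := fun _ _ ↦ rfl }
  (LinearMap.isSimpleModule_iff_of_bijective untwist (of σ).symm.bijective).2 ‹_›

theorem exists_addEquiv_of_linearEquiv {σ : R →+* R} [Module R W]
    (e : TwistedModule σ W ≃ₗ[R] W) :
    ∃ f : W ≃+ W, ∀ (a : R) (w : W), f (σ a • w) = a • f w :=
  ⟨(of σ).trans e.toAddEquiv, fun a w ↦ e.map_smul a (of σ w)⟩

end TwistedModule

theorem exists_smul_eq_zero_and_smul_ne_zero {R W ι : Type*} [Ring R] [AddCommGroup W] [Module R W]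
    [IsSimpleModule R W] (σ : ι → R →+* R) [∀ i, RingHomSurjective (σ i)] (s : Finset ι)
    (hσ : ∀ i ∈ s, IsEmpty (TwistedModule (σ i) W ≃ₗ[R] W)) {w : W} (hw : w ≠ 0) :
    ∃ a : R, (∀ i ∈ s, σ i a • w = 0) ∧ a • w ≠ 0 := by
  by_contra! hvanish
  let orbit (i : ι) : R →ₗ[R] TwistedModule (σ i) W :=
    LinearMap.toSpanSingleton R _ (TwistedModule.of (σ i) w)
  have horbit : LinearMap.toSpanSingleton R W w ≠ 0 := by
    simpa only [ne_eq, LinearMap.toSpanSingleton_eq_zero_iff] using hw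
  have hle : s.inf (fun i ↦ (orbit i).ker) ≤ (LinearMap.toSpanSingleton R W w).ker := by
    intro a ha
    refine hvanish a fun i hi ↦ (TwistedModule.of (σ i)).map_eq_zero_iff.1 ?_
    rw [← TwistedModule.smul_of]
    exact Finset.inf_le (f := fun i ↦ (orbit i).ker) hi ha
  obtain ⟨i, hi, ⟨e⟩⟩ := exists_nonempty_linearEquiv_of_inf_ker_le_ker horbit s hle
  exact (hσ i hi).false e

theorem smul_sum_smul {G M : Type*} [Group G] [Fintype G] [AddCommMonoid M]
    [DistribMulAction G M] (h : G) (m : M) : h • ∑ g : G, g • m = ∑ g : G, g • m := by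
  simp only [Finset.smul_sum, smul_smul]
  exact Equiv.sum_comp (Equiv.mulLeft h) (· • m)

theorem simple_over_fixed_subalgebra_of_finite_order_general {R G W : Type*} [Ring R] [Group G]
    [Finite G] [MulSemiringAction G R] [AddCommGroup W] [Module R W] [IsSimpleModule R W]
    (htwist : ∀ g : G, g ≠ 1 →
      IsEmpty (TwistedModule (MulSemiringAction.toRingHom G R g) W ≃ₗ[R] W))
    (B : Subring R) (hB : ∀ a : R, (∀ g : G, g • a = a) → a ∈ B) : IsSimpleModule B W := by
  classical
  have := Fintype.ofFinite G
  have (g : G) : RingHomSurjective (MulSemiringAction.toRingHom G R g) :=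
    ⟨MulAction.surjective g⟩
  refine isSimpleModule_iff_toSpanSingleton_surjective.2
    ⟨IsSimpleModule.nontrivial R W, fun w hw u ↦ ?_⟩
  obtain ⟨a, ha_twist, ha⟩ := exists_smul_eq_zero_and_smul_ne_zero
    (MulSemiringAction.toRingHom G R) (Finset.univ.erase 1)
    (fun g hg ↦ htwist g (Finset.ne_of_mem_erase hg)) hw
  obtain ⟨c, hc : c • a • w = u⟩ := IsSimpleModule.toSpanSingleton_surjective R ha u
  have hzero (g : G) (hg : g ≠ 1) : (g • (c * a)) • w = 0 := by
    have hga : (g • a) • w = 0 := ha_twist g (Finset.mem_erase.2 ⟨hg, Finset.mem_univ g⟩)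
    rw [smul_mul', mul_smul, hga, smul_zero]
  refine ⟨⟨∑ g : G, g • (c * a), hB _ fun h ↦ smul_sum_smul h _⟩, ?_⟩
  calc (∑ g : G, g • (c * a)) • w
      = ∑ g : G, (g • (c * a)) • w := Finset.sum_smul
    _ = ((1 : G) • (c * a)) • w := Fintype.sum_eq_single 1 hzero
    _ = u := by rw [one_smul, mul_smul, hc]

theorem exists_pow_eq_of_mem_zpowers_of_ne_one {G : Type*} [Group G] {g h : G} {p : ℕ}
    (hp : 0 < p) (hg : g ^ p = 1) (hmem : h ∈ Subgroup.zpowers g) (hne : h ≠ 1) :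
    ∃ i, 0 < i ∧ i < p ∧ g ^ i = h := by
  classical
  have hfin : IsOfFinOrder g := isOfFinOrder_iff_pow_eq_one.2 ⟨p, hp, hg⟩
  obtain ⟨i, hi, rfl⟩ := Finset.mem_image.1 (hfin.mem_zpowers_iff_mem_range_orderOf.1 hmem)
  have hip : i < p := (Finset.mem_range.1 hi).trans_le (orderOf_le_of_pow_eq_one hp hg)
  have hi0 : i ≠ 0 := fun h ↦ hne (by rw [h, pow_zero])
  exact ⟨i, Nat.pos_of_ne_zero hi0, hip, rfl⟩

/-- Let `g` be a `ℂ`-algebra automorphism of `A` with `g^p = id`, `p ≥ 1`,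
and `W` a simple `A`-module with `W ∘ gⁱ ≇ W` for `1 ≤ i ≤ p − 1`. Then `W` is simple over
the fixed subalgebra `A^g`. -/
theorem simple_over_fixed_subalgebra_of_finite_order
    (A : Type*) [Ring A] [Algebra ℂ A]
    (p : ℕ) (hp : 1 ≤ p)
    (g : A ≃ₐ[ℂ] A) (hg : g ^ p = 1)
    (W : Type*) [AddCommGroup W] [Module A W]
    (hW : IsSimpleModule A W)
    (hnoniso : ∀ i : ℕ, 1 ≤ i → i ≤ p - 1 →
      ¬ ∃ f : W ≃+ W, ∀ (a : A) (w : W), f ((g ^ i) a • w) = a • f w) :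
    IsSimpleModule (fixedSubalgebra g) W := by
  have : Finite (Subgroup.zpowers g) :=
    (isOfFinOrder_iff_pow_eq_one.2 ⟨p, hp, hg⟩).finite_zpowers
  refine simple_over_fixed_subalgebra_of_finite_order_general (G := Subgroup.zpowers g)
    (fun ⟨h, hmem⟩ hne ↦ ⟨fun e ↦ ?_⟩) (fixedSubalgebra g).toSubring
    fun a ha ↦ ha ⟨g, Subgroup.mem_zpowers g⟩
  obtain ⟨i, hi, hip, rfl⟩ :=
    exists_pow_eq_of_mem_zpowers_of_ne_one hp hg hmem (Subtype.coe_ne_coe.2 hne)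
  exact hnoniso i hi (Nat.le_sub_one_of_lt hip) (TwistedModule.exists_addEquiv_of_linearEquiv e)
end

section
/- Let A be a unital associative algebra over ℂ, p ≥ 1, and g a ℂ-algebra automorphism of A with g^p = id. Let W be a simple left A-module of at most countable complex dimension and Φ : W → W a ℂ-linear bijection with Φ(a·w) = g(a)·Φ(w) for all a, w, and Φ^p = id_W. Let ζ = e^{2πi/p} and W^j = ker(Φ − ζ^j·id_W) for 0 ≤ j ≤ p−1. Then for i ≠ j with W^i ≠ 0 and W^j ≠ 0, the A^g-modules W^i and W^j are not isomorphic, where A^g = {a ∈ A : g(a) = a} is the fixed subalgebra. -/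
/-- The primitive `p`-th root of unity `ζ = e^{2πi/p}`. -/
noncomputable def primRoot (p : ℕ) : ℂ :=
  Complex.exp (2 * Real.pi * Complex.I / p)

/-- The eigenspace `W^j = ker(Φ − ζ^j·id)` of a `ℂ`-linear map `Φ`, for `ζ = e^{2πi/p}`. -/
noncomputable def eigenSp {W : Type*} [AddCommGroup W] [Module ℂ W]
    (Φ : W →ₗ[ℂ] W) (p j : ℕ) : Submodule ℂ W :=
  LinearMap.ker (Φ - (primRoot p) ^ j • (1 : W →ₗ[ℂ] W))

/-!
Averaging over the powers of `g` turns an element of `A` into a fixed element without changing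
how it acts on an eigenvector `x` of `Φ`, as long as it maps `x` into the line through `x`. Hence
it suffices to find `a : A` with `a • x = x` and `a • y = 0` for eigenvectors `x`, `y` of distinct
eigenvalues: the average then kills `y` but not `x`, so no `A^g`-linear map sends `x` to `y`.
Jacobson density provides `a` once `x` is not a multiple of `y` over the division algebra
`End_A W`, and `End_A W = ℂ`, because an element transcendental over `ℂ` would embed `ℂ(X)`, which
has uncountable dimension, into `End_A W`, and evaluation at a nonzero vector embeds `End_A W`
into `W`.
-/

open Cardinal Polynomial

universe u v w

section Schur

variable {k : Type u} [Field k]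

theorem exists_algHom_fractionRing_polynomial_of_transcendental {D : Type*} [DivisionRing D]
    [Algebra k D] {x : D} (hx : Transcendental k x) :
    Nonempty (FractionRing k[X] →ₐ[k] D) := by
  have isUnit_aeval (q : nonZeroDivisors k[X]) :
      IsUnit (((aeval x : k[X] →ₐ[k] D) : k[X] →* D).comp (nonZeroDivisors k[X]).subtype q) :=
    .mk0 _ (mt (transcendental_iff.1 hx q) (nonZeroDivisors.ne_zero q.2))
  -- `IsLocalization.lift` requires a commutative target; Ore localization does not.
  let φ : FractionRing k[X] →+* D :=
    OreLocalization.universalHom (aeval x : k[X] →ₐ[k] D).toRingHom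
      (IsUnit.liftRight _ isUnit_aeval) fun _ ↦ rfl
  have φ_algebraMap (q : k[X]) : φ (algebraMap k[X] (FractionRing k[X]) q) = aeval x q :=
    OreLocalization.universalHom_commutes _ _ _
  refine ⟨⟨φ, fun c ↦ ?_⟩⟩
  change φ (algebraMap k (FractionRing k[X]) c) = _
  rw [IsScalarTower.algebraMap_apply k k[X], φ_algebraMap, algebraMap_eq, aeval_C]

theorem lift_mk_le_lift_rank_of_transcendental {D : Type v} [DivisionRing D] [Algebra k D]
    {x : D} (hx : Transcendental k x) : lift.{v} #k ≤ lift.{u} (Module.rank k D) := by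
  obtain ⟨φ⟩ := exists_algHom_fractionRing_polynomial_of_transcendental hx
  have transcendental_X : Transcendental k (algebraMap k[X] (FractionRing k[X]) X) :=
    (transcendental_algebraMap_iff (IsFractionRing.injective _ _)).2 (Polynomial.transcendental_X k)
  have resolvents_independent := transcendental_X.linearIndependent_sub_inv.map_injOn φ.toLinearMap
    (φ : FractionRing k[X] →+* D).injective.injOn
  exact resolvents_independent.cardinal_lift_le_rank

variable {A : Type*} {W : Type w} [Ring A] [Algebra k A] [AddCommGroup W] [Module k W] [Module A W]
  [IsScalarTower k A W] [IsSimpleModule A W]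

theorem lift_mk_le_lift_rank_of_transcendental_end {T : Module.End A W} (hT : Transcendental k T) :
    lift.{w} #k ≤ lift.{u} (Module.rank k W) := by
  classical
  have := IsSimpleModule.nontrivial A W
  obtain ⟨w, hw⟩ := exists_ne (0 : W)
  let eval : Module.End A W →ₗ[k] W := LinearMap.applyₗ' k w
  have eval_injective : Function.Injective eval := by
    refine (injective_iff_map_eq_zero eval).2 fun S hS ↦ by_contra fun hS₀ ↦ hw ?_
    exact LinearMap.injective_of_ne_zero hS₀ (hS.trans (map_zero S).symm)
  calc lift.{w} #k ≤ lift.{u} (Module.rank k (Module.End A W)) :=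
        lift_mk_le_lift_rank_of_transcendental hT
    _ ≤ lift.{u} (Module.rank k W) :=
        lift_le.2 (eval.rank_le_of_injective eval_injective)

theorem algebraMap_end_surjective_of_lift_rank_lt [IsAlgClosed k]
    (hrank : lift.{u} (Module.rank k W) < lift.{w} #k) :
    Function.Surjective (algebraMap k (Module.End A W)) := by
  classical
  have : Algebra.IsAlgebraic k (Module.End A W) :=
    ⟨fun _ ↦ by_contra fun hT ↦ hrank.not_ge (lift_mk_le_lift_rank_of_transcendental_end hT)⟩
  exact IsAlgClosed.algebraMap_bijective_of_isIntegral.surjective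

theorem algebraMap_end_surjective_of_rank_le_aleph0 {A W : Type*} [Ring A] [Algebra ℂ A]
    [AddCommGroup W] [Module ℂ W] [Module A W] [IsScalarTower ℂ A W] [IsSimpleModule A W]
    (hrank : Module.rank ℂ W ≤ ℵ₀) : Function.Surjective (algebraMap ℂ (Module.End A W)) :=
  algebraMap_end_surjective_of_lift_rank_lt <| by
    simpa only [lift_uzero, mk_complex, lift_continuum] using hrank.trans_lt aleph0_lt_continuum

end Schur

theorem exists_smul_eq_and_smul_eq_zero_of_notMem_span {A W : Type*} [Ring A] [AddCommGroup W]
    [Module A W] [IsSimpleModule A W] {x y : W}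
    (hxy : x ∉ Submodule.span (Module.End A W) {y}) (z : W) :
    ∃ a : A, a • x = z ∧ a • y = 0 := by
  classical
  obtain ⟨f, hfy, hfx⟩ := LinearMap.exists_extend_of_notMem 0 hxy z
  obtain ⟨a, ha⟩ := jacobson_density f {x, y}
  have f_y : f y = 0 := congr($hfy ⟨y, Submodule.mem_span_singleton_self y⟩)
  exact ⟨a, by rw [← ha x (by simp), hfx], by rw [← ha y (by simp), f_y]⟩

section CyclicAverage

variable {k V : Type*} [Field k] [AddCommGroup V] [Module k V]

/-- The average `n⁻¹ (1 + T + ⋯ + Tⁿ⁻¹)` of the first `n` powers of `T`; when `Tⁿ = 1` it takes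
values in the fixed vectors of `T`. It is `0` when `n` vanishes in `k`. -/
noncomputable def cyclicAverage (T : Module.End k V) (n : ℕ) : Module.End k V :=
  (n : k)⁻¹ • ∑ i ∈ Finset.range n, T ^ i

theorem apply_cyclicAverage {T : Module.End k V} {n : ℕ} (hT : T ^ n = 1) (v : V) :
    T (cyclicAverage T n v) = cyclicAverage T n v := by
  have mul_average : (T - 1) * cyclicAverage T n = 0 := by
    rw [cyclicAverage, mul_smul_comm, mul_geom_sum, hT, sub_self, smul_zero]
  exact sub_eq_zero.1 congr($mul_average v)

end CyclicAverage

section TwistedLinear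

variable {k A W : Type*} [Field k] [Ring A] [AddCommGroup W] [Module k W] [Module A W]

theorem injective_or_eq_zero_of_map_smul [IsSimpleModule A W] {g : A → A} {Φ : Module.End k W}
    (hΦ : ∀ (a : A) (w : W), Φ (a • w) = g a • Φ w) : Function.Injective Φ ∨ Φ = 0 := by
  let kerΦ : Submodule A W :=
    { (LinearMap.ker Φ).toAddSubmonoid with
      smul_mem' := fun a w (hw : Φ w = 0) ↦ show Φ (a • w) = 0 by rw [hΦ, hw, smul_zero] }
  refine (eq_bot_or_eq_top kerΦ).imp (fun h ↦ ?_) fun h ↦ ?_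
  · exact (injective_iff_map_eq_zero Φ).2 ((Submodule.eq_bot_iff kerΦ).1 h)
  · exact LinearMap.ext (Submodule.eq_top_iff'.1 h)

theorem eigenvalue_ne_zero_of_injective {Φ : Module.End k W} (hΦ : Function.Injective Φ) {μ : k}
    {x : W} (hx : Φ.HasEigenvector μ x) : μ ≠ 0 := by
  rintro rfl
  exact hx.2 (hΦ (by rw [hx.apply_eq_smul, zero_smul, map_zero]))

variable [Algebra k A] [IsScalarTower k A W] {Φ : Module.End k W}

theorem map_smul_eigenvector_eq_smul {g : A → A} (hΦ : ∀ (a : A) (w : W), Φ (a • w) = g a • Φ w)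
    {μ : k} (hμ : μ ≠ 0) {x : W} (hx : Φ x = μ • x) {a : A} {c : k} (ha : a • x = c • x) :
    g a • x = c • x := by
  refine smul_right_injective W hμ ?_
  calc μ • g a • x = g a • Φ x := by rw [hx, smul_algebra_smul_comm]
    _ = Φ (a • x) := (hΦ a x).symm
    _ = μ • c • x := by rw [ha, map_smul, hx, smul_comm]

variable {g : Module.End k A} {n : ℕ}

theorem cyclicAverage_smul_eigenvector (hn : (n : k) ≠ 0)
    (hΦ : ∀ (a : A) (w : W), Φ (a • w) = g a • Φ w) {μ : k} (hμ : μ ≠ 0) {x : W}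
    (hx : Φ x = μ • x) {a : A} {c : k} (ha : a • x = c • x) :
    cyclicAverage g n a • x = c • x := by
  have pow_smul (i : ℕ) : (g ^ i) a • x = c • x := by
    induction i with
    | zero => exact ha
    | succ i ih =>
      rw [pow_succ', Module.End.mul_apply]
      exact map_smul_eigenvector_eq_smul hΦ hμ hx ih
  calc cyclicAverage g n a • x = (n : k)⁻¹ • ∑ i ∈ Finset.range n, (g ^ i) a • x := by
        rw [cyclicAverage, LinearMap.smul_apply, LinearMap.sum_apply, smul_assoc, Finset.sum_smul]
    _ = (n : k)⁻¹ • (n : k) • c • x := by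
        simp only [pow_smul, Finset.sum_const, Finset.card_range, Nat.cast_smul_eq_nsmul]
    _ = c • x := inv_smul_smul₀ hn _

variable {μ ν : k} {x y : W}

theorem notMem_span_end_of_hasEigenvector
    (hEnd : Function.Surjective (algebraMap k (Module.End A W))) (hμν : μ ≠ ν)
    (hx : Φ.HasEigenvector μ x) (hy : Φ.HasEigenvector ν y) :
    x ∉ Submodule.span (Module.End A W) {y} := by
  intro hxy
  obtain ⟨T, rfl⟩ := Submodule.mem_span_singleton.1 hxy
  obtain ⟨c, rfl⟩ := hEnd T
  have mem_eigenspace_ν : algebraMap k (Module.End A W) c • y ∈ Φ.eigenspace ν :=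
    (Φ.eigenspace ν).smul_mem c hy.1
  have eigenspaces_disjoint : Disjoint (Φ.eigenspace μ) (Φ.eigenspace ν) :=
    Module.End.disjoint_genEigenspace Φ hμν 1 1
  exact hx.2 (Submodule.disjoint_def.1 eigenspaces_disjoint _ hx.1 mem_eigenspace_ν)

variable [IsSimpleModule A W]

theorem exists_fixed_smul_eq_self_and_smul_eq_zero
    (hEnd : Function.Surjective (algebraMap k (Module.End A W))) (hn : (n : k) ≠ 0)
    (hg : g ^ n = 1) (hΦ : ∀ (a : A) (w : W), Φ (a • w) = g a • Φ w) (hμν : μ ≠ ν)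
    (hx : Φ.HasEigenvector μ x) (hy : Φ.HasEigenvector ν y) :
    ∃ b : A, g b = b ∧ b • x = x ∧ b • y = 0 := by
  have Φ_injective : Function.Injective Φ := by
    refine (injective_or_eq_zero_of_map_smul hΦ).resolve_right ?_
    rintro rfl
    have eq_zero {ξ : k} {w : W} (hw : (0 : Module.End k W).HasEigenvector ξ w) : ξ = 0 :=
      (smul_eq_zero.1 hw.apply_eq_smul.symm).resolve_right hw.2
    exact hμν ((eq_zero hx).trans (eq_zero hy).symm)
  obtain ⟨a, hax, hay⟩ := exists_smul_eq_and_smul_eq_zero_of_notMem_span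
    (notMem_span_end_of_hasEigenvector hEnd hμν hx hy) x
  refine ⟨cyclicAverage g n a, apply_cyclicAverage hg a, ?_, ?_⟩
  · simpa using cyclicAverage_smul_eigenvector hn hΦ
      (eigenvalue_ne_zero_of_injective Φ_injective hx) hx.apply_eq_smul (c := 1) (by simpa)
  · simpa using cyclicAverage_smul_eigenvector hn hΦ
      (eigenvalue_ne_zero_of_injective Φ_injective hy) hy.apply_eq_smul (c := 0) (by simpa)

theorem eigenspaces_nonisomorphic_over_fixed_subalgebra_general {g : A ≃ₐ[k] A}
    (hEnd : Function.Surjective (algebraMap k (Module.End A W))) (hn : (n : k) ≠ 0)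
    (hg : g ^ n = 1) (hΦ : ∀ (a : A) (w : W), Φ (a • w) = g a • Φ w) (hμν : μ ≠ ν)
    (f : Φ.eigenspace μ →+ Φ.eigenspace ν)
    (hf : ∀ a : A, g a = a → ∀ (x : Φ.eigenspace μ) (hx : a • (x : W) ∈ Φ.eigenspace μ),
      (f ⟨a • (x : W), hx⟩ : W) = a • (f x : W)) : f = 0 := by
  ext x
  by_contra hfx
  have hx : (x : W) ≠ 0 := fun h ↦ hfx (by rw [ZeroMemClass.coe_eq_zero.1 h, map_zero, map_zero])
  have toLinearMap_pow_eq_one : g.toLinearMap ^ n = 1 := by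
    rw [← AlgEquiv.pow_toLinearMap, hg, AlgEquiv.one_toLinearMap]
  obtain ⟨b, hgb, hbx, hby⟩ := exists_fixed_smul_eq_self_and_smul_eq_zero hEnd hn
    toLinearMap_pow_eq_one hΦ hμν ⟨x.2, hx⟩ ⟨(f x).2, hfx⟩
  refine hfx ?_
  calc (f x : W) = f ⟨b • (x : W), hbx.symm ▸ x.2⟩ := by simp only [hbx]
    _ = b • (f x : W) := hf b hgb x _
    _ = 0 := hby

end TwistedLinear

theorem eigenSp_eq_eigenspace {W : Type*} [AddCommGroup W] [Module ℂ W] (Φ : W →ₗ[ℂ] W)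
    (p j : ℕ) : eigenSp Φ p j = Module.End.eigenspace Φ (primRoot p ^ j) :=
  Module.End.eigenspace_def.symm

theorem primRoot_pow_injective (p : ℕ) :
    Function.Injective fun i : Fin p ↦ primRoot p ^ (i : ℕ) := fun i j hij ↦
  Fin.ext ((Complex.isPrimitiveRoot_exp p i.pos.ne').pow_inj i.2 j.2 hij)

/-- With `g^p = id`, `W` simple of at most countable complex dimension,
and `Φ` as in Statement 8, the nonzero eigenspaces `W^i = ker(Φ − ζ^i·id)` for distinct
`i, j` are non-isomorphic as `A^g`-modules: there is no additive bijection `W^i → W^j`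
commuting with the action of every `g`-fixed element of `A`. -/
theorem eigenspaces_nonisomorphic_over_fixed_subalgebra
    (A : Type*) [Ring A] [Algebra ℂ A]
    (p : ℕ) (hp : 1 ≤ p)
    (g : A ≃ₐ[ℂ] A) (hg : g ^ p = 1)
    (W : Type*) [AddCommGroup W] [Module ℂ W] [Module A W] [IsScalarTower ℂ A W]
    (hW : IsSimpleModule A W)
    (hcount : Module.rank ℂ W ≤ Cardinal.aleph0)
    (Φ : W →ₗ[ℂ] W) (hbij : Function.Bijective Φ)
    (hcomm : ∀ (a : A) (w : W), Φ (a • w) = g a • Φ w)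
    (hΦp : Φ ^ p = (1 : W →ₗ[ℂ] W)) :
    ∀ i j : Fin p, i ≠ j →
      eigenSp Φ p (i : ℕ) ≠ ⊥ → eigenSp Φ p (j : ℕ) ≠ ⊥ →
      ¬ ∃ f : (eigenSp Φ p (i : ℕ)) ≃+ (eigenSp Φ p (j : ℕ)),
          ∀ a : A, g a = a → ∀ (x : eigenSp Φ p (i : ℕ))
            (hx : a • (x : W) ∈ eigenSp Φ p (i : ℕ)),
            (f ⟨a • (x : W), hx⟩ : W) = a • (f x : W) := by
  intro i j hij hi _
  rw [eigenSp_eq_eigenspace, eigenSp_eq_eigenspace]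
  rintro ⟨f, hf⟩
  rw [eigenSp_eq_eigenspace, ← Submodule.nontrivial_iff_ne_bot] at hi
  have f_eq_zero : f.toAddMonoidHom = 0 :=
    eigenspaces_nonisomorphic_over_fixed_subalgebra_general
      (algebraMap_end_surjective_of_rank_le_aleph0 hcount)
      (Nat.cast_ne_zero.2 (Nat.one_le_iff_ne_zero.1 hp)) hg hcomm
      ((primRoot_pow_injective p).ne hij) f.toAddMonoidHom hf
  obtain ⟨x, hx⟩ := exists_ne (0 : Module.End.eigenspace Φ (primRoot p ^ (i : ℕ)))
  exact hx (f.map_eq_zero_iff.1 congr($f_eq_zero x))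
end

section
/- Let L be a Lie algebra over ℂ and 𝔫 ⊆ L a Lie subalgebra such that for every x ∈ 𝔫 the map ad x is locally nilpotent on L. Let λ, μ : 𝔫 → ℂ be Whittaker functions with λ ≠ μ (there is x₀ ∈ 𝔫 with λ(x₀) ≠ μ(x₀)). Let W_λ be a simple U(L)-module that is a Whittaker module of type λ, and W_μ a simple U(L)-module that is a Whittaker module of type μ. Then W_λ and W_μ are not isomorphic as U(L)-modules. -/
/-!
Fix `x : L` with `ad x` locally nilpotent. In any `U(L)`-module, the generalized `χ`-eigenspace of
`ι x` is stable under `ι y` for every `y : L`, because `y` lies in the generalized `0`-eigenspace of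
`ad x`; it is therefore a `U(L)`-submodule. If the module is generated by an eigenvector of `ι x`
with eigenvalue `χ`, this submodule is everything, so `χ` is the only possible eigenvalue of `ι x`.
A `U(L)`-linear map preserves eigenvalues, hence it kills a generator of any other eigenvalue.
-/

open Module.End (disjoint_genEigenspace eigenspace_le_maxGenEigenspace mem_eigenspace_iff)
open UniversalEnvelopingAlgebra (ι mkAlgHom)

theorem smul_mem_of_adjoin_eq_top {R A M : Type*} [CommSemiring R] [Semiring A] [Algebra R A]
    [AddCommMonoid M] [Module R M] [Module A M] [IsScalarTower R A M] {s : Set A}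
    (hs : Algebra.adjoin R s = ⊤) {p : Submodule R M} (hp : ∀ a ∈ s, ∀ m ∈ p, a • m ∈ p)
    (a : A) {m : M} (hm : m ∈ p) : a • m ∈ p := by
  have ha : a ∈ Algebra.adjoin R s := hs ▸ Algebra.mem_top
  induction ha using Algebra.adjoin_induction generalizing m with
  | mem a ha => exact hp a ha m hm
  | algebraMap r => exact algebraMap_smul A r m ▸ p.smul_mem r hm
  | add a b _ _ iha ihb => exact add_smul a b m ▸ p.add_mem (iha hm) (ihb hm)
  | mul a b _ _ iha ihb => exact mul_smul a b m ▸ iha (ihb hm)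

section CommRing

variable {R L : Type*} [CommRing R] [LieRing L] [LieAlgebra R L]

theorem engel_eq_top_iff_forall_exists_iterate_lie_eq_zero {x : L} :
    LieSubalgebra.engel R x = ⊤ ↔ ∀ y : L, ∃ k : ℕ, (fun z : L ↦ ⁅x, z⁆)^[k] y = 0 := by
  have mem_engel_iff (y : L) :
      y ∈ LieSubalgebra.engel R x ↔ ∃ k : ℕ, (fun z : L ↦ ⁅x, z⁆)^[k] y = 0 := by
    simp only [LieSubalgebra.mem_engel_iff, Module.End.pow_apply]
    rfl
  simp only [SetLike.ext_iff, LieSubalgebra.mem_top, iff_true, mem_engel_iff]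

variable (R L) in
theorem adjoin_range_universalEnvelopingAlgebra_ι :
    Algebra.adjoin R (Set.range (ι R : L → UniversalEnvelopingAlgebra R L)) = ⊤ := by
  have range_ι : Set.range (ι R : L → UniversalEnvelopingAlgebra R L) =
      mkAlgHom R L '' Set.range (TensorAlgebra.ι R) := by
    rw [← Set.range_comp]
    rfl
  rw [range_ι, ← AlgHom.map_adjoin, TensorAlgebra.adjoin_range_ι, Algebra.map_top]
  exact RingCon.range_mkₐ

variable {W : Type*} [AddCommGroup W] [Module R W] [Module (UniversalEnvelopingAlgebra R L) W]
  [IsScalarTower R (UniversalEnvelopingAlgebra R L) W]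

section LieModule

attribute [local instance 100] LieRing.ofAssociativeRing
attribute [local instance] LieRingModule.ofAssociativeModule LieModule.ofAssociativeModule

theorem ι_smul_mem_maxGenEigenspace_ι {x y : L} (hy : y ∈ LieSubalgebra.engel R x) {χ : R} {w : W}
    (hw : w ∈ (Algebra.lsmul R R W (ι R x)).maxGenEigenspace χ) :
    ι R y • w ∈ (Algebra.lsmul R R W (ι R x)).maxGenEigenspace χ := by
  let : LieRingModule L W := LieRingModule.compLieHom W (ι R)
  have : LieModule R L W := LieModule.compLieHom W (ι R)
  have hyw := LieModule.lie_mem_maxGenEigenspace_toEnd (L := L) (M := W) hy hw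
  rwa [zero_add] at hyw

end LieModule

theorem smul_mem_maxGenEigenspace_ι {x : L} (hx : LieSubalgebra.engel R x = ⊤)
    (a : UniversalEnvelopingAlgebra R L) {χ : R} {w : W}
    (hw : w ∈ (Algebra.lsmul R R W (ι R x)).maxGenEigenspace χ) :
    a • w ∈ (Algebra.lsmul R R W (ι R x)).maxGenEigenspace χ := by
  refine smul_mem_of_adjoin_eq_top (adjoin_range_universalEnvelopingAlgebra_ι R L) ?_ a hw
  rintro _ ⟨y, rfl⟩ v hv
  exact ι_smul_mem_maxGenEigenspace_ι (hx ▸ LieSubalgebra.mem_top y) hv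

theorem maxGenEigenspace_ι_eq_top {x : L} (hx : LieSubalgebra.engel R x = ⊤) {w : W}
    (hgen : Submodule.span (UniversalEnvelopingAlgebra R L) {w} = ⊤) {χ : R}
    (hw : ι R x • w = χ • w) :
    (Algebra.lsmul R R W (ι R x)).maxGenEigenspace χ = ⊤ := by
  have w_mem : w ∈ (Algebra.lsmul R R W (ι R x)).maxGenEigenspace χ :=
    eigenspace_le_maxGenEigenspace (mem_eigenspace_iff.2 hw)
  refine eq_top_iff.2 fun v _ ↦ ?_
  obtain ⟨a, rfl⟩ := Submodule.mem_span_singleton.1 (hgen ▸ Submodule.mem_top : v ∈ _)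
  exact smul_mem_maxGenEigenspace_ι hx a w_mem

theorem eq_zero_of_ι_smul_eq_smul_of_ne [IsDomain R] [Module.IsTorsionFree R W] {x : L}
    (hx : LieSubalgebra.engel R x = ⊤) {w : W}
    (hgen : Submodule.span (UniversalEnvelopingAlgebra R L) {w} = ⊤) {χ ψ : R} (hne : ψ ≠ χ)
    (hw : ι R x • w = χ • w) {v : W} (hv : ι R x • v = ψ • v) : v = 0 := by
  have v_mem_eigenspace : v ∈ (Algebra.lsmul R R W (ι R x)).eigenspace ψ :=
    mem_eigenspace_iff.2 hv
  have v_mem_maxGenEigenspace : v ∈ (Algebra.lsmul R R W (ι R x)).maxGenEigenspace χ :=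
    maxGenEigenspace_ι_eq_top hx hgen hw ▸ Submodule.mem_top
  exact Submodule.disjoint_def.1 (disjoint_genEigenspace _ hne 1 ⊤) v v_mem_eigenspace
    v_mem_maxGenEigenspace

end CommRing

theorem whittaker_modules_of_distinct_type_nonisomorphic_general
    {K L : Type*} [Field K] [LieRing L] [LieAlgebra K L] {N : Set L}
    (hnil : ∀ x : N, ∀ y : L, ∃ k : ℕ, (fun z : L ↦ ⁅(x : L), z⁆)^[k] y = 0)
    {lam mu : N → K} (hne : lam ≠ mu)
    {W₁ : Type*} [AddCommGroup W₁] [Module (UniversalEnvelopingAlgebra K L) W₁]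
    {W₂ : Type*} [AddCommGroup W₂] [Module (UniversalEnvelopingAlgebra K L) W₂]
    {w₁ : W₁} (hgen₁ : Submodule.span (UniversalEnvelopingAlgebra K L) {w₁} = ⊤)
    (hw₁ : ∀ x : N, ι K (x : L) • w₁ =
      algebraMap K (UniversalEnvelopingAlgebra K L) (lam x) • w₁)
    {w₂ : W₂} (hgen₂ : Submodule.span (UniversalEnvelopingAlgebra K L) {w₂} = ⊤)
    (hw₂ : ∀ x : N, ι K (x : L) • w₂ =
      algebraMap K (UniversalEnvelopingAlgebra K L) (mu x) • w₂)
    (f : W₁ →ₗ[UniversalEnvelopingAlgebra K L] W₂) : f = 0 := by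
  let : Module K W₂ := Module.compHom W₂ (algebraMap K (UniversalEnvelopingAlgebra K L))
  have : IsScalarTower K (UniversalEnvelopingAlgebra K L) W₂ :=
    .of_algebraMap_smul fun _ _ ↦ rfl
  obtain ⟨x, hx⟩ := Function.ne_iff.1 hne
  have f_w₁_eigenvector : ι K (x : L) • f w₁ = lam x • f w₁ := by
    rw [← map_smul, hw₁, map_smul, algebraMap_smul]
  have f_w₁_eq_zero : f w₁ = 0 :=
    eq_zero_of_ι_smul_eq_smul_of_ne
      (engel_eq_top_iff_forall_exists_iterate_lie_eq_zero.2 (hnil x)) hgen₂ hx (hw₂ x)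
      f_w₁_eigenvector
  exact LinearMap.ext_on hgen₁ (by simpa using f_w₁_eq_zero)

/-- Simple Whittaker `U(L)`-modules of distinct Whittaker types `λ ≠ μ`
(for a Lie subalgebra `𝔫 ⊆ L` acting ad-locally-nilpotently on `L`) are non-isomorphic. -/
theorem whittaker_modules_of_distinct_type_nonisomorphic
    (L : Type*) [LieRing L] [LieAlgebra ℂ L]
    (N : LieSubalgebra ℂ L)
    (hnil : ∀ x : N, ∀ y : L, ∃ k : ℕ, (fun z : L => ⁅(x : L), z⁆)^[k] y = 0)
    (lam mu : N →ₗ[ℂ] ℂ)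
    (hlam : ∀ x y : N, lam ⁅x, y⁆ = 0) (hmu : ∀ x y : N, mu ⁅x, y⁆ = 0)
    (hne : lam ≠ mu)
    (W₁ : Type*) [AddCommGroup W₁] [Module (UniversalEnvelopingAlgebra ℂ L) W₁]
    (W₂ : Type*) [AddCommGroup W₂] [Module (UniversalEnvelopingAlgebra ℂ L) W₂]
    (h₁ : IsSimpleModule (UniversalEnvelopingAlgebra ℂ L) W₁)
    (h₂ : IsSimpleModule (UniversalEnvelopingAlgebra ℂ L) W₂)
    (w₁ : W₁) (hgen₁ : Submodule.span (UniversalEnvelopingAlgebra ℂ L) {w₁} = ⊤)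
    (hw₁ : ∀ x : N, UniversalEnvelopingAlgebra.ι ℂ (x : L) • w₁ =
      algebraMap ℂ (UniversalEnvelopingAlgebra ℂ L) (lam x) • w₁)
    (w₂ : W₂) (hgen₂ : Submodule.span (UniversalEnvelopingAlgebra ℂ L) {w₂} = ⊤)
    (hw₂ : ∀ x : N, UniversalEnvelopingAlgebra.ι ℂ (x : L) • w₂ =
      algebraMap ℂ (UniversalEnvelopingAlgebra ℂ L) (mu x) • w₂) :
    IsEmpty (W₁ ≃ₗ[UniversalEnvelopingAlgebra ℂ L] W₂) := by
  have := IsSimpleModule.nontrivial (UniversalEnvelopingAlgebra ℂ L) W₁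
  obtain ⟨w, hw⟩ := exists_ne (0 : W₁)
  exact ⟨fun e ↦ hw <| e.map_eq_zero_iff.1 <| LinearMap.congr_fun
    (whittaker_modules_of_distinct_type_nonisomorphic_general (N := N) hnil
      (DFunLike.coe_injective.ne hne) hgen₁ hw₁ hgen₂ hw₂ e.toLinearMap) w⟩
end
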